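/- For a pure state |ψ⟩ = Σ_{n≥1} ψ_n |n⟩, the generalized robustness of coherence equals (Σ_{n≥1} |ψ_n|)², finite if and only if the amplitudes are absolutely summable. -/

import Mathlib

noncomputable section
open scoped ENNReal ComplexOrder
open Filter

variable {H : Type} [NormedAddCommGroup H] [InnerProductSpace ℂ H] [CompleteSpace H]

local notation "⟪" x ", " y "⟫" => @inner ℂ _ _ x y

/-- Bounded operators on `H`. -/
abbrev Op (H : Type) [NormedAddCommGroup H] [InnerProductSpace ℂ H] : Type := H →L[ℂ] H

/-- The rank-one projector `|ψ⟩⟨ψ|`. -/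
def projv (ψ : H) : Op H := (innerSL ℂ ψ).smulRight ψ

/-- The trace of an operator with respect to a Hilbert basis. -/
def trB {ι : Type} (e : HilbertBasis ι ℂ H) (T : Op H) : ℂ := ∑' n, ⟪e n, T (e n)⟫

/-- A density operator: positive, trace-class (summable diagonal), unit trace. -/
def IsDensity {ι : Type} (e : HilbertBasis ι ℂ H) (ρ : Op H) : Prop :=
  ρ.IsPositive ∧ Summable (fun n => (⟪e n, ρ (e n)⟫).re) ∧ trB e ρ = 1

/-- The trace norm `Tr |T| = Tr √(T†T)`. -/
def traceNorm {ι : Type} (e : HilbertBasis ι ℂ H) (T : Op H) : ℝ :=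
  ∑' n, (⟪e n, (CFC.sqrt (ContinuousLinearMap.adjoint T ∘L T)) (e n)⟫).re

/-- Sequential closure of a set of operators in the trace norm. -/
def tnClosure {ι : Type} (e : HilbertBasis ι ℂ H) (S : Set (Op H)) : Set (Op H) :=
  {T | ∃ u : ℕ → Op H, (∀ k, u k ∈ S) ∧
    Tendsto (fun k => traceNorm e (u k - T)) atTop (nhds 0)}

/-- The generalized robustness `R_F(ρ) = inf {1 + λ | (ρ + λτ)/(1+λ) ∈ F, τ a density operator}`. -/
def Robustness {ι : Type} (e : HilbertBasis ι ℂ H) (F : Set (Op H)) (ρ : Op H) : ℝ≥0∞ :=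
  sInf {r : ℝ≥0∞ | ∃ lam : ℝ, 0 ≤ lam ∧ ∃ τ : Op H, IsDensity e τ ∧
    ((1 + lam)⁻¹ : ℝ) • (ρ + lam • τ) ∈ F ∧ r = ENNReal.ofReal (1 + lam)}

/-- The incoherent states: trace-norm closed convex hull of the basis-state projectors. -/
def IncoherentStates (e : HilbertBasis ℕ ℂ H) : Set (Op H) :=
  tnClosure e (convexHull ℝ {T : Op H | ∃ n : ℕ, T = projv (e n)})


lemma enorm_parseval (e : HilbertBasis ℕ ℂ H) (x : H) :
    ∑' m, ENNReal.ofReal (‖⟪e m, x⟫‖ ^ 2) = ENNReal.ofReal (‖x‖ ^ 2) := by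
  have h := e.hasSum_inner_mul_inner x x
  have h2 : HasSum (fun m => ‖⟪e m, x⟫‖ ^ 2) (‖x‖ ^ 2) := by
    have h3 := Complex.hasSum_re h
    have h4 : (⟪x, x⟫).re = ‖x‖ ^ 2 := by
      have := inner_self_eq_norm_sq (𝕜 := ℂ) x
      simpa using this
    rw [h4] at h3
    convert h3 using 2 with m
    rw [← inner_conj_symm x (e m), ← Complex.normSq_eq_conj_mul_self, Complex.ofReal_re,
      Complex.normSq_eq_norm_sq]
  rw [← ENNReal.ofReal_tsum_of_nonneg (fun _ => by positivity) h2.summable, h2.tsum_eq]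

lemma hs_symm (e : HilbertBasis ℕ ℂ H) (T : Op H) :
    ∑' n, ENNReal.ofReal (‖T (e n)‖ ^ 2) =
      ∑' n, ENNReal.ofReal (‖ContinuousLinearMap.adjoint T (e n)‖ ^ 2) := by
  simp_rw [← enorm_parseval e]
  rw [ENNReal.tsum_comm]
  congr 1; ext m; congr 1; ext n
  rw [ContinuousLinearMap.adjoint_inner_right, norm_inner_symm]

lemma exists_root {A : Op H} (hA : A.IsPositive) :
    ∃ R : Op H, ContinuousLinearMap.adjoint R = R ∧ ∀ x, A x = R (R x) := by
  have h0 : 0 ≤ A := (ContinuousLinearMap.nonneg_iff_isPositive A).2 hA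
  refine ⟨CFC.sqrt A, ?_, ?_⟩
  · exact (CFC.sqrt_nonneg A).isSelfAdjoint.star_eq
  · intro x
    conv_lhs => rw [← CFC.sqrt_mul_sqrt_self A h0]
    rfl

lemma root_diag {A R : Op H} (h1 : ContinuousLinearMap.adjoint R = R) (h2 : ∀ x, A x = R (R x))
    (x : H) : (⟪x, A x⟫).re = ‖R x‖ ^ 2 := by
  rw [h2, ← h1, ContinuousLinearMap.adjoint_inner_right, h1]
  have := inner_self_eq_norm_sq (𝕜 := ℂ) (R x)
  simpa using this

lemma sum_contr (e : HilbertBasis ℕ ℂ H) {A : Op H} (hA : A.IsPositive)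
    (hs : Summable (fun n => (⟪e n, A (e n)⟫).re)) (S : Op H) (hS : ‖S‖ ≤ 1) (N : Finset ℕ) :
    ∑ n ∈ N, ‖⟪S (e n), A (e n)⟫‖ ≤ ∑' n, (⟪e n, A (e n)⟫).re := by
  obtain ⟨R, h1, h2⟩ := exists_root hA
  have hd : ∀ n, (⟪e n, A (e n)⟫).re = ‖R (e n)‖ ^ 2 := fun n => root_diag h1 h2 _
  simp_rw [hd] at hs ⊢
  have hE : ∑' n, ENNReal.ofReal (‖R (S (e n))‖ ^ 2) ≤
      ENNReal.ofReal (∑' n, ‖R (e n)‖ ^ 2) := by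
    rw [ENNReal.ofReal_tsum_of_nonneg (fun _ => by positivity) hs]
    have := hs_symm e (R ∘L S)
    simp only [ContinuousLinearMap.comp_apply] at this
    rw [this, ContinuousLinearMap.adjoint_comp, h1]
    refine ENNReal.tsum_le_tsum fun n => ENNReal.ofReal_le_ofReal ?_
    simp only [ContinuousLinearMap.comp_apply]
    gcongr
    refine (ContinuousLinearMap.le_opNorm _ _).trans ?_
    rw [LinearIsometryEquiv.norm_map]
    nlinarith [norm_nonneg (R (e n))]
  have hN : ∑ n ∈ N, ‖R (S (e n))‖ ^ 2 ≤ ∑' n, ‖R (e n)‖ ^ 2 := by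
    have h3 := (ENNReal.sum_le_tsum N).trans hE
    rw [← ENNReal.ofReal_sum_of_nonneg (fun _ _ => by positivity)] at h3
    exact (ENNReal.ofReal_le_ofReal_iff (tsum_nonneg fun _ => by positivity)).1 h3
  have hN2 : ∑ n ∈ N, ‖R (e n)‖ ^ 2 ≤ ∑' n, ‖R (e n)‖ ^ 2 :=
    hs.sum_le_tsum N fun _ _ => by positivity
  have hterm : ∀ n, ‖⟪S (e n), A (e n)⟫‖ ≤ (‖R (S (e n))‖ ^ 2 + ‖R (e n)‖ ^ 2) / 2 := by
    intro n
    rw [h2, ← h1, ContinuousLinearMap.adjoint_inner_right, h1]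
    refine (norm_inner_le_norm _ _).trans ?_
    nlinarith [sq_nonneg (‖R (S (e n))‖ - ‖R (e n)‖)]
  calc _ ≤ ∑ n ∈ N, (‖R (S (e n))‖ ^ 2 + ‖R (e n)‖ ^ 2) / 2 := Finset.sum_le_sum fun n _ => hterm n
    _ = (∑ n ∈ N, ‖R (S (e n))‖ ^ 2 + ∑ n ∈ N, ‖R (e n)‖ ^ 2) / 2 := by
      rw [← Finset.sum_div, Finset.sum_add_distrib]
    _ ≤ _ := by linarith

lemma exists_approx_sign {D : Op H} (hD : IsSelfAdjoint D) {ε : ℝ} (hε : 0 < ε) :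
    ∃ S : Op H, ContinuousLinearMap.adjoint S = S ∧ ‖S‖ ≤ 1 ∧ ‖CFC.abs D - S * D‖ ≤ ε := by
  have hc : Continuous (fun t : ℝ => t / (|t| + ε)) := by
    refine continuous_id.div (by fun_prop) fun t => by positivity
  refine ⟨cfc (fun t : ℝ => t / (|t| + ε)) D, ?_, ?_, ?_⟩
  · exact (cfc_predicate (fun t : ℝ => t / (|t| + ε)) D : IsSelfAdjoint _).star_eq
  · refine norm_cfc_le zero_le_one fun x _ => ?_
    rw [norm_div, Real.norm_eq_abs, Real.norm_eq_abs, abs_of_pos (by positivity : 0 < |x| + ε),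
      div_le_one (by positivity)]
    linarith
  · have hid : D = cfc (fun t : ℝ => t) D := (cfc_id' ℝ D hD).symm
    have : CFC.abs D - cfc (fun t : ℝ => t / (|t| + ε)) D * D =
        cfc (fun t : ℝ => ‖t‖ - t / (|t| + ε) * t) D := by
      rw [CFC.abs_eq_cfc_norm D hD]
      conv_lhs => enter [2, 2]; rw [hid]
      rw [← cfc_mul (fun t : ℝ => t / (|t| + ε)) (fun t => t) D hc.continuousOn
        continuousOn_id, ← cfc_sub (fun t : ℝ => ‖t‖) (fun t => t / (|t| + ε) * t) D
        continuous_norm.continuousOn (hc.mul continuous_id).continuousOn]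
    rw [this]
    refine norm_cfc_le hε.le fun x _ => ?_
    have h1 : ‖x‖ - x / (|x| + ε) * x = ε * |x| / (|x| + ε) := by
      have : |x| + ε ≠ 0 := by positivity
      rw [Real.norm_eq_abs]
      field_simp
      nlinarith [sq_abs x]
    rw [h1, Real.norm_eq_abs, abs_of_nonneg (by positivity), div_le_iff₀ (by positivity)]
    nlinarith [abs_nonneg x]

lemma summable_abs_sub (e : HilbertBasis ℕ ℂ H) {A B : Op H} (hA : A.IsPositive)
    (hsA : Summable (fun n => (⟪e n, A (e n)⟫).re)) (hB : B.IsPositive)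
    (hsB : Summable (fun n => (⟪e n, B (e n)⟫).re)) :
    Summable (fun n => (⟪e n, CFC.abs (A - B) (e n)⟫).re) := by
  have hpos : (CFC.abs (A - B)).IsPositive :=
    (ContinuousLinearMap.nonneg_iff_isPositive _).1 (CFC.abs_nonneg _)
  refine summable_of_sum_le (c := ∑' n, (⟪e n, A (e n)⟫).re + ∑' n, (⟪e n, B (e n)⟫).re)
    (fun n => hpos.re_inner_nonneg_right (e n)) fun N => ?_
  refine le_of_forall_pos_le_add fun δ hδ => ?_
  obtain ⟨S, h1, h2, h3⟩ := exists_approx_sign (hA.isSelfAdjoint.sub hB.isSelfAdjoint)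
    (ε := δ / (N.card + 1)) (by positivity)
  have hterm : ∀ n, (⟪e n, CFC.abs (A - B) (e n)⟫).re ≤
      ‖⟪S (e n), A (e n)⟫‖ + ‖⟪S (e n), B (e n)⟫‖ + δ / (N.card + 1) := by
    intro n
    have hdec : CFC.abs (A - B) (e n) =
        (CFC.abs (A - B) - S * (A - B)) (e n) + (S (A (e n)) - S (B (e n))) := by
      simp
    have hb : ‖⟪e n, (CFC.abs (A - B) - S * (A - B)) (e n)⟫‖ ≤ δ / (N.card + 1) := by
      refine (norm_inner_le_norm _ _).trans ?_
      have := (CFC.abs (A - B) - S * (A - B)).le_opNorm (e n)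
      rw [e.orthonormal.1 n] at *
      linarith
    have hSx : ∀ y, ⟪e n, S y⟫ = ⟪S (e n), y⟫ := fun y => by
      conv_lhs => rw [← h1]
      rw [ContinuousLinearMap.adjoint_inner_right]
    rw [hdec, inner_add_right, inner_sub_right, hSx, hSx, Complex.add_re, Complex.sub_re]
    have := Complex.abs_re_le_norm (⟪S (e n), A (e n)⟫)
    have := Complex.abs_re_le_norm (⟪S (e n), B (e n)⟫)
    have := Complex.abs_re_le_norm (⟪e n, (CFC.abs (A - B) - S * (A - B)) (e n)⟫)
    grind
  have hcard : ∑ n ∈ N, δ / ((N.card : ℝ) + 1) ≤ δ := by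
    rw [Finset.sum_const, nsmul_eq_mul, mul_div_assoc', div_le_iff₀ (by positivity)]
    nlinarith
  have := Finset.sum_le_sum fun n (_ : n ∈ N) => hterm n
  rw [Finset.sum_add_distrib, Finset.sum_add_distrib] at this
  linarith [sum_contr e hA hsA S h2 N, sum_contr e hB hsB S h2 N]

/-- positive operators with summable diagonal control finite quadratic forms. -/
lemma quad_le (e : HilbertBasis ℕ ℂ H) {A : Op H} (hA : A.IsPositive)
    (hs : Summable (fun n => (⟪e n, A (e n)⟫).re)) (N : Finset ℕ) (c : ℕ → ℂ)
    (hc : ∀ n, ‖c n‖ ≤ 1) :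
    (⟪∑ n ∈ N, c n • e n, A (∑ n ∈ N, c n • e n)⟫).re ≤
      (N.card : ℝ) ^ 2 * ∑' n, (⟪e n, A (e n)⟫).re := by
  obtain ⟨R, h1, h2⟩ := exists_root hA
  have hd : ∀ x, (⟪x, A x⟫).re = ‖R x‖ ^ 2 := fun n => root_diag h1 h2 _
  simp_rw [hd] at hs ⊢
  set t := ∑' n, ‖R (e n)‖ ^ 2
  have ht : 0 ≤ t := tsum_nonneg fun _ => by positivity
  have hle : ∀ n, ‖R (e n)‖ ≤ √t := fun n => 
    Real.le_sqrt_of_sq_le (hs.le_tsum n fun _ _ => by positivity)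
  have : ‖R (∑ n ∈ N, c n • e n)‖ ≤ N.card * √t := by
    rw [map_sum]
    refine (norm_sum_le _ _).trans ?_
    rw [← nsmul_eq_mul]
    refine Finset.sum_le_card_nsmul _ _ _ fun n _ => ?_
    rw [map_smul, norm_smul]
    calc _ ≤ 1 * √t := by gcongr; exacts [hc n, hle n]
      _ = _ := one_mul _
  calc _ ≤ (N.card * √t) ^ 2 := by gcongr
    _ = _ := by rw [mul_pow, Real.sq_sqrt ht]

lemma hasSum_cong {f g : ℕ → ℝ} {a b : ℝ} (h : HasSum f a) (hf : ∀ n, g n = f n) (hb : b = a) :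
    HasSum g b := by
  obtain rfl : g = f := funext hf
  rwa [hb]

lemma projv_apply (v x : H) : projv v x = ⟪v, x⟫ • v := rfl

lemma projv_quad (v x : H) : ⟪x, projv v x⟫ = ((‖⟪v, x⟫‖ ^ 2 : ℝ) : ℂ) := by
  rw [projv_apply, inner_smul_right, ← inner_conj_symm x v, Complex.mul_conj,
    Complex.normSq_eq_norm_sq]

/-- a positivity criterion -/
lemma pos_of_quad {A : Op H} (h1 : ∀ x, (⟪x, A x⟫).im = 0) (h2 : ∀ x, 0 ≤ (⟪x, A x⟫).re) :
    A.IsPositive := by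
  rw [ContinuousLinearMap.isPositive_iff_complex]
  intro x
  have h3 : ⟪A x, x⟫ = (((⟪x, A x⟫).re : ℝ) : ℂ) := by
    rw [← inner_conj_symm]
    exact Complex.ext (by simp only [Complex.conj_re, Complex.ofReal_re])
      (by simp only [Complex.conj_im, Complex.ofReal_im, h1 x, neg_zero])
  rw [h3]
  exact ⟨rfl, h2 x⟩

lemma projv_pos (v : H) : (projv v).IsPositive := by
  refine pos_of_quad (fun x => ?_) fun x => ?_
  · rw [projv_quad, Complex.ofReal_im]
  · rw [projv_quad, Complex.ofReal_re]
    positivity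

lemma rsmul_pos {A : Op H} (hA : A.IsPositive) {a : ℝ} (ha : 0 ≤ a) : (a • A).IsPositive := by
  have := hA.smul_of_nonneg (c := (a : ℂ)) (by exact_mod_cast ha)
  rwa [Complex.coe_smul] at this

lemma re_inner_smul (a : ℝ) (A : Op H) (x y : H) : (⟪x, (a • A) y⟫).re = a * (⟪x, A y⟫).re := by
  rw [smul_apply, ← Complex.coe_smul, inner_smul_right, Complex.re_ofReal_mul]

lemma hilbert_ext (e : HilbertBasis ℕ ℂ H) {x y : H} (h : ∀ n, ⟪e n, x⟫ = ⟪e n, y⟫) : x = y := by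
  apply e.repr.injective
  ext n
  rw [e.repr_apply_apply, e.repr_apply_apply, h n]

lemma inner_finsum (e : HilbertBasis ℕ ℂ H) (N : Finset ℕ) (c : ℕ → ℂ) (n : ℕ) :
    ⟪e n, ∑ m ∈ N, c m • e m⟫ = if n ∈ N then c n else 0 := by
  simp_rw [inner_sum, inner_smul_right, (orthonormal_iff_ite.1 e.orthonormal)]
  simp

lemma inner_bb (e : HilbertBasis ℕ ℂ H) (n m : ℕ) : ⟪e n, e m⟫ = if n = m then 1 else 0 :=
  orthonormal_iff_ite.1 e.orthonormal n m

lemma hull_props (e : HilbertBasis ℕ ℂ H) (N : Finset ℕ) (c : ℕ → ℂ)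
    (hc : ∀ n, ‖c n‖ ≤ 1) {u : Op H}
    (hu : u ∈ convexHull ℝ {T : Op H | ∃ n : ℕ, T = projv (e n)}) :
    u.IsPositive ∧ Summable (fun n => (⟪e n, u (e n)⟫).re) ∧
      (⟪∑ n ∈ N, c n • e n, u (∑ n ∈ N, c n • e n)⟫).re ≤ 1 := by
  have hconv : Convex ℝ {u : Op H | u.IsPositive ∧ Summable (fun n => (⟪e n, u (e n)⟫).re) ∧
      (⟪∑ n ∈ N, c n • e n, u (∑ n ∈ N, c n • e n)⟫).re ≤ 1} := by
    rintro A ⟨h1, h2, h3⟩ B ⟨g1, g2, g3⟩ a b ha hb hab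
    refine ⟨(rsmul_pos h1 ha).add (rsmul_pos g1 hb), ?_, ?_⟩
    · simp_rw [add_apply, inner_add_right, Complex.add_re, re_inner_smul]
      exact (h2.mul_left a).add (g2.mul_left b)
    · rw [add_apply, inner_add_right, Complex.add_re, re_inner_smul,
        re_inner_smul]
      nlinarith
  refine convexHull_min ?_ hconv hu
  rintro T ⟨m, rfl⟩
  refine ⟨projv_pos _, ?_, ?_⟩
  · simp_rw [projv_quad, Complex.ofReal_re]
    refine summable_of_ne_finset_zero (s := {m}) fun n hn => ?_
    rw [inner_bb, if_neg (by simpa [eq_comm] using hn)]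
    simp
  · rw [projv_quad, Complex.ofReal_re, inner_finsum]
    split_ifs
    · exact pow_le_one₀ (norm_nonneg _) (hc m)
    · simp

lemma incoh_quad (e : HilbertBasis ℕ ℂ H) (N : Finset ℕ) (c : ℕ → ℂ)
    (hc : ∀ n, ‖c n‖ ≤ 1) {σ : Op H} (hσ : σ.IsPositive)
    (hs : Summable (fun n => (⟪e n, σ (e n)⟫).re)) (hI : σ ∈ IncoherentStates e) :
    (⟪∑ n ∈ N, c n • e n, σ (∑ n ∈ N, c n • e n)⟫).re ≤ 1 := by
  obtain ⟨u, hu, hlim⟩ := hI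
  set x := ∑ n ∈ N, c n • e n with hx
  have key : ∀ k, (⟪x, σ x⟫).re ≤ 1 + (N.card : ℝ) ^ 2 * traceNorm e (u k - σ) := by
    intro k
    obtain ⟨h1, h2, h3⟩ := hull_props e N c hc (hu k)
    have hpos : (CFC.abs (u k - σ)).IsPositive :=
      (ContinuousLinearMap.nonneg_iff_isPositive _).1 (CFC.abs_nonneg _)
    have h4 := quad_le e hpos (summable_abs_sub e h1 h2 hσ hs) N c hc
    have h5 : (CFC.abs (u k - σ) + (u k - σ)).IsPositive := by
      rw [← ContinuousLinearMap.nonneg_iff_isPositive,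
        CFC.abs_add_self _ (h1.isSelfAdjoint.sub hσ.isSelfAdjoint)]
      exact nsmul_nonneg (CFC.posPart_nonneg _) 2
    have h6 := h5.re_inner_nonneg_right x
    simp only [add_apply, sub_apply, inner_add_right,
      inner_sub_right, RCLike.re_eq_complex_re, Complex.add_re, Complex.sub_re] at h6
    have h7 : traceNorm e (u k - σ) = ∑' n, (⟪e n, CFC.abs (u k - σ) (e n)⟫).re := rfl
    rw [h7]
    rw [← hx] at h3 h4
    linarith
  have hl : Tendsto (fun k => 1 + (N.card : ℝ) ^ 2 * traceNorm e (u k - σ)) atTop (nhds 1) := by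
    simpa using (hlim.const_mul ((N.card : ℝ) ^ 2)).const_add 1
  exact ge_of_tendsto' hl key

/-- diagonal operator -/
def diagOp (e : HilbertBasis ℕ ℂ H) (p : ℕ → ℝ) : Op H := ∑' n, p n • projv (e n)

lemma diag_summable (e : HilbertBasis ℕ ℂ H) {p : ℕ → ℝ} (hp : Summable p) :
    Summable (fun n => p n • projv (e n)) := by
  refine Summable.of_norm_bounded hp.abs fun n => ?_
  rw [norm_smul, Real.norm_eq_abs]
  have : ‖projv (e n)‖ ≤ 1 := by
    rw [projv, ContinuousLinearMap.norm_smulRight_apply, innerSL_apply_norm, e.orthonormal.1 n]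
    norm_num
  nlinarith [abs_nonneg (p n)]

lemma inner_diag (e : HilbertBasis ℕ ℂ H) {p : ℕ → ℝ} (hp : Summable p) (m : ℕ) (x : H) :
    ⟪e m, diagOp e p x⟫ = p m * ⟪e m, x⟫ := by
  have h1 := (diag_summable e hp).hasSum
  have h2 := (ContinuousLinearMap.apply ℂ H x).hasSum h1
  have h3 := (innerSL ℂ (e m)).hasSum h2
  have h4 := hasSum_single (f := fun n => (innerSL ℂ (e m))
      ((ContinuousLinearMap.apply ℂ H x) (p n • projv (e n)))) m (fun n hn => by
    simp [projv_apply, inner_smul_right, inner_bb, Ne.symm hn, ← Complex.coe_smul])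
  have h5 := h3.unique h4
  simp only [ContinuousLinearMap.apply_apply, innerSL_apply_apply] at h5
  rw [diagOp, h5, smul_apply, projv_apply, ← Complex.coe_smul,
    inner_smul_right, inner_smul_right, inner_bb, if_pos rfl, mul_one]

lemma diag_quad (e : HilbertBasis ℕ ℂ H) {p : ℕ → ℝ} (hp : Summable p) (x : H) :
    HasSum (fun n => ((p n * ‖⟪e n, x⟫‖ ^ 2 : ℝ) : ℂ)) ⟪x, diagOp e p x⟫ := by
  have h := e.hasSum_inner_mul_inner x (diagOp e p x)
  refine (congrArg (fun f => HasSum f _) (funext fun n => ?_)).mpr h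
  rw [inner_diag e hp, mul_left_comm, ← inner_conj_symm x (e n), ← Complex.normSq_eq_conj_mul_self,
    Complex.normSq_eq_norm_sq]
  push_cast
  rfl

lemma diag_quad_re (e : HilbertBasis ℕ ℂ H) {p : ℕ → ℝ} (hp : Summable p) (x : H) :
    HasSum (fun n => p n * ‖⟪e n, x⟫‖ ^ 2) (⟪x, diagOp e p x⟫).re := by
  simpa only [Complex.ofReal_re] using Complex.hasSum_re (diag_quad e hp x)

lemma diag_quad_im (e : HilbertBasis ℕ ℂ H) {p : ℕ → ℝ} (hp : Summable p) (x : H) :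
    (⟪x, diagOp e p x⟫).im = 0 := by
  have := Complex.hasSum_im (diag_quad e hp x)
  simp only [Complex.ofReal_im] at this
  exact this.unique hasSum_zero

lemma diag_pos (e : HilbertBasis ℕ ℂ H) {p : ℕ → ℝ} (hp : Summable p) (h0 : ∀ n, 0 ≤ p n) :
    (diagOp e p).IsPositive :=
  pos_of_quad (diag_quad_im e hp) fun x =>
    (diag_quad_re e hp x).nonneg fun n => mul_nonneg (h0 n) (by positivity)

lemma traceNorm_diag (e : HilbertBasis ℕ ℂ H) {d : ℕ → ℝ} (hd : Summable d) :
    traceNorm e (diagOp e d) = ∑' n, |d n| := by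
  have hsq : CFC.sqrt (ContinuousLinearMap.adjoint (diagOp e d) ∘L (diagOp e d)) =
      diagOp e (fun n => |d n|) := by
    refine CFC.sqrt_unique ?_ ?_
    · ext x
      refine hilbert_ext e fun n => ?_
      have hadj : ∀ y, ⟪e n, ContinuousLinearMap.adjoint (diagOp e d) y⟫ = d n * ⟪e n, y⟫ := by
        intro y
        have : diagOp e d (e n) = (d n : ℂ) • e n := by
          refine hilbert_ext e fun m => ?_
          rw [inner_diag e hd, inner_smul_right, inner_bb]
          split_ifs with h
          · rw [h]
          · simp
        rw [ContinuousLinearMap.adjoint_inner_right, this, inner_smul_left, Complex.conj_ofReal]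
      change ⟪e n, diagOp e (fun n => |d n|) (diagOp e (fun n => |d n|) x)⟫ =
        ⟪e n, ContinuousLinearMap.adjoint (diagOp e d) (diagOp e d x)⟫
      rw [hadj, inner_diag e hd.abs, inner_diag e hd.abs, inner_diag e hd, ← mul_assoc,
        ← mul_assoc, ← Complex.ofReal_mul, ← Complex.ofReal_mul, abs_mul_abs_self]
    · exact (ContinuousLinearMap.nonneg_iff_isPositive _).2
        (diag_pos e hd.abs fun n => abs_nonneg _)
  rw [traceNorm, hsq]
  congr 1; ext n
  rw [inner_diag e hd.abs, inner_bb, if_pos rfl]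
  simp

lemma diag_sub (e : HilbertBasis ℕ ℂ H) {p q : ℕ → ℝ} (hp : Summable p) (hq : Summable q) :
    diagOp e p - diagOp e q = diagOp e (fun n => p n - q n) := by
  ext x
  refine hilbert_ext e fun n => ?_
  rw [sub_apply, inner_sub_right, inner_diag e hp, inner_diag e hq,
    inner_diag e (hp.sub hq)]
  push_cast
  ring

lemma diag_incoh (e : HilbertBasis ℕ ℂ H) {p : ℕ → ℝ} (h0 : ∀ n, 0 ≤ p n) (hp : HasSum p 1) :
    diagOp e p ∈ IncoherentStates e := by
  set r : ℕ → ℝ := fun k => 1 - ∑ n ∈ Finset.range k, p n with hr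
  have hr0 : ∀ k, 0 ≤ r k := fun k => by
    have := sum_le_hasSum (Finset.range k) (fun n _ => h0 n) hp
    simp only [hr]; linarith
  have hrl : Tendsto r atTop (nhds 0) := by
    simpa using hp.tendsto_sum_nat.const_sub 1
  set w : ℕ → ℕ → ℝ := fun k n => (if n < k then p n else 0) + (if n = 0 then r k else 0) with hw
  have hw0 : ∀ k n, 0 ≤ w k n := fun k n => by
    have := h0 n
    have := hr0 k
    simp only [hw]; split_ifs <;> linarith
  have hws : ∀ k n, n ∉ Finset.range (k + 1) → w k n = 0 := by
    intro k n hn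
    simp only [Finset.mem_range, not_lt] at hn
    simp only [hw]
    rw [if_neg (by omega), if_neg (by omega), add_zero]
  have hA : ∀ k, HasSum (fun n => if n < k then p n else 0) (∑ n ∈ Finset.range k, p n) := by
    intro k
    have := hasSum_sum_of_ne_finset_zero (L := SummationFilter.unconditional ℕ) (f := fun n => if n < k then p n else 0)
      (s := Finset.range k) (fun n hn => by simpa using fun h => absurd h (by simpa using hn))
    convert this using 1
    exact Finset.sum_congr rfl fun n hn => by rw [if_pos (by simpa using hn)]
  have hB : ∀ k, HasSum (fun n => if n = 0 then r k else 0) (r k) := fun k => hasSum_ite_eq 0 (r k)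
  have hwsum : ∀ k, HasSum (w k) 1 := by
    intro k
    have := (hA k).add (hB k)
    convert this using 1
    simp [hr]
  refine ⟨fun k => diagOp e (w k), fun k => ?_, ?_⟩
  · have hfin : diagOp e (w k) = ∑ n ∈ Finset.range (k + 1), w k n • projv (e n) :=
      tsum_eq_sum fun n hn => by rw [hws k n hn, zero_smul]
    beta_reduce
    rw [hfin]
    refine (convex_convexHull ℝ _).sum_mem (fun n _ => hw0 k n) ?_ fun n _ =>
      subset_convexHull ℝ _ ⟨n, rfl⟩
    rw [← tsum_eq_sum (L := SummationFilter.unconditional ℕ) (hws k)]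
    exact (hwsum k).tsum_eq
  · have hbd : ∀ k, traceNorm e (diagOp e (w k) - diagOp e p) ≤ 2 * r k := by
      intro k
      rw [diag_sub e (hwsum k).summable hp.summable,
        traceNorm_diag e ((hwsum k).summable.sub hp.summable)]
      have hC := ((hp.sub (hA k)).add (hB k))
      have : 1 - ∑ n ∈ Finset.range k, p n + r k = 2 * r k := by simp only [hr]; ring
      rw [← this, ← hC.tsum_eq]
      refine ((hwsum k).summable.sub hp.summable).abs.tsum_le_tsum (fun n => ?_) hC.summable
      have := h0 n
      have := hr0 k
      simp only [hw]
      rw [abs_le]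
      split_ifs <;> constructor <;> linarith
    refine squeeze_zero (fun k => ?_) hbd (by simpa using hrl.const_mul 2)
    rw [diag_sub e (hwsum k).summable hp.summable,
        traceNorm_diag e ((hwsum k).summable.sub hp.summable)]
    exact tsum_nonneg fun _ => abs_nonneg _

lemma exists_vec (e : HilbertBasis ℕ ℂ H) (ψ : ℕ → ℂ) (hsq : Summable (fun n => ‖ψ n‖ ^ 2)) (n : ℕ) :
    ⟪e n, ∑' n : ℕ, ψ n • e n⟫ = ψ n := by
  have hm : Memℓp ψ 2 := by
    refine memℓp_gen ?_
    simpa using hsq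
  have h := e.hasSum_repr_symm ⟨ψ, hm⟩
  have h2 : ∑' n : ℕ, ψ n • e n = e.repr.symm ⟨ψ, hm⟩ := h.tsum_eq
  rw [h2, ← e.repr_apply_apply, LinearIsometryEquiv.apply_symm_apply]

lemma lower_bound (e : HilbertBasis ℕ ℂ H) (v : H) {lam : ℝ} (hl : 0 ≤ lam) {τ : Op H}
    (hτ : IsDensity e τ) (hI : ((1 + lam)⁻¹ : ℝ) • (projv v + lam • τ) ∈ IncoherentStates e)
    (hsq : Summable (fun n => ‖⟪e n, v⟫‖ ^ 2)) (N : Finset ℕ) :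
    ∑ n ∈ N, ‖⟪e n, v⟫‖ ≤ √(1 + lam) := by
  obtain ⟨h1, h2, -⟩ := hτ
  have hl1 : 0 < 1 + lam := by linarith
  have hpos : (((1 + lam)⁻¹ : ℝ) • (projv v + lam • τ)).IsPositive :=
    rsmul_pos ((projv_pos v).add (rsmul_pos h1 hl)) (by positivity)
  have hs : Summable (fun n => (⟪e n, (((1 + lam)⁻¹ : ℝ) • (projv v + lam • τ)) (e n)⟫).re) := by
    simp_rw [re_inner_smul, add_apply, inner_add_right, Complex.add_re, re_inner_smul, projv_quad,
      Complex.ofReal_re, norm_inner_symm v]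
    exact (hsq.add (h2.mul_left lam)).mul_left _
  set c : ℕ → ℂ := fun n => ⟪e n, v⟫ / ‖⟪e n, v⟫‖ with hcdef
  have hc : ∀ n, ‖c n‖ ≤ 1 := fun n => by
    simp only [hcdef, norm_div, Complex.norm_real, norm_norm]
    exact div_self_le_one _
  have h3 := incoh_quad e N c hc hpos hs hI
  have h4 := h1.re_inner_nonneg_right (∑ n ∈ N, c n • e n)
  rw [re_inner_smul, add_apply, inner_add_right, Complex.add_re, re_inner_smul, projv_quad,
      Complex.ofReal_re, inv_mul_le_iff₀ hl1] at h3
  have h5 : ⟪v, ∑ n ∈ N, c n • e n⟫ = ((∑ n ∈ N, ‖⟪e n, v⟫‖ : ℝ) : ℂ) := by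
    rw [inner_sum, Complex.ofReal_sum]
    refine Finset.sum_congr rfl fun n _ => ?_
    rw [inner_smul_right, ← inner_conj_symm v (e n)]
    simp only [hcdef]
    rw [div_mul_eq_mul_div, Complex.mul_conj, Complex.normSq_eq_norm_sq]
    by_cases h : ‖⟪e n, v⟫‖ = 0
    · simp [h]
    · rw [← Complex.ofReal_div]
      congr 1
      field_simp
  rw [h5, Complex.norm_real, Real.norm_eq_abs, sq_abs] at h3
  refine Real.le_sqrt_of_sq_le ?_
  have : 0 ≤ lam * (⟪∑ n ∈ N, c n • e n, τ (∑ n ∈ N, c n • e n)⟫).re := mul_nonneg hl h4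
  linarith

lemma upper_quad (e : HilbertBasis ℕ ℂ H) (v : H) (hs : Summable (fun n => ‖⟪e n, v⟫‖)) (x : H) :
    ‖⟪v, x⟫‖ ^ 2 ≤ (∑' n, ‖⟪e n, v⟫‖) * (⟪x, diagOp e (fun n => ‖⟪e n, v⟫‖) x⟫).re := by
  have hq := diag_quad_re e hs x
  set Q := (⟪x, diagOp e (fun n => ‖⟪e n, v⟫‖) x⟫).re
  set S := ∑' n, ‖⟪e n, v⟫‖ with hS
  have hSs : HasSum (fun n => ‖⟪e n, v⟫‖) S := hs.hasSum
  have hyb : ∀ n, ‖⟪e n, x⟫‖ ≤ ‖x‖ := fun n => by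
    simpa [e.orthonormal.1 n] using norm_inner_le_norm (𝕜 := ℂ) (e n) x
  have hy : Summable (fun n => ‖⟪e n, v⟫‖ * ‖⟪e n, x⟫‖) :=
    Summable.of_nonneg_of_le (fun n => by positivity)
      (fun n => mul_le_mul_of_nonneg_left (hyb n) (norm_nonneg _)) (hs.mul_right ‖x‖)
  set Y := ∑' n, ‖⟪e n, v⟫‖ * ‖⟪e n, x⟫‖ with hY
  have hYs : HasSum (fun n => ‖⟪e n, v⟫‖ * ‖⟪e n, x⟫‖) Y := hy.hasSum
  have h1 : ‖⟪v, x⟫‖ ≤ Y := by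
    rw [← e.tsum_inner_mul_inner v x]
    have hn : ∀ n, ‖⟪v, e n⟫ * ⟪e n, x⟫‖ = ‖⟪e n, v⟫‖ * ‖⟪e n, x⟫‖ := fun n => by
      rw [norm_mul, norm_inner_symm]
    refine (norm_tsum_le_tsum_norm (by simpa only [hn] using hy)).trans ?_
    simp_rw [hn]
    exact le_rfl
  have hS0 : 0 ≤ S := tsum_nonneg fun _ => norm_nonneg _
  have hY0 : 0 ≤ Y := (norm_nonneg _).trans h1
  have h2 : HasSum (fun n => ‖⟪e n, v⟫‖ * (S * ‖⟪e n, x⟫‖ - Y) ^ 2)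
      (S ^ 2 * Q - 2 * S * Y * Y + Y ^ 2 * S) := by
    have := ((hq.mul_left (S ^ 2)).sub (hYs.mul_left (2 * S * Y))).add (hSs.mul_left (Y ^ 2))
    exact hasSum_cong this (fun n => by ring) rfl
  have h3 := h2.nonneg fun n => by positivity
  rcases hS0.eq_or_lt with h | h
  · have hz : ∀ n, ‖⟪e n, v⟫‖ = 0 := fun n => by
      have := hs.le_tsum n fun _ _ => norm_nonneg _
      rw [← hS, ← h] at this
      exact le_antisymm this (norm_nonneg _)
    have : Y = 0 := by rw [hY]; simp [hz]
    rw [this] at h1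
    have : ‖⟪v, x⟫‖ = 0 := le_antisymm h1 (norm_nonneg _)
    rw [this, ← h]; simp
  · have h4 : 0 ≤ S * Q - Y ^ 2 := by
      by_contra hneg
      push Not at hneg
      nlinarith
    have : ‖⟪v, x⟫‖ ^ 2 ≤ Y ^ 2 := by gcongr
    linarith

lemma upper_bound (e : HilbertBasis ℕ ℂ H) (v : H) (hs : Summable (fun n => ‖⟪e n, v⟫‖))
    (hsq : HasSum (fun n => ‖⟪e n, v⟫‖ ^ 2) 1) {ε : ℝ} (hε : 0 < ε) :
    Robustness e (IncoherentStates e) (projv v) ≤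
      ENNReal.ofReal ((∑' n, ‖⟪e n, v⟫‖) ^ 2 + ε) := by
  have hu := upper_quad e v hs
  set S := ∑' n, ‖⟪e n, v⟫‖ with hS
  have hSs : HasSum (fun n => ‖⟪e n, v⟫‖) S := hs.hasSum
  have hS0 : 0 ≤ S := tsum_nonneg fun _ => norm_nonneg _
  have hS1 : 1 ≤ S ^ 2 := by
    have h2 := hasSum_le (fun n => ?_) hsq (hSs.mul_left S)
    · linarith
    · have := hs.le_tsum n fun _ _ => norm_nonneg _
      rw [sq]
      exact mul_le_mul_of_nonneg_right this (norm_nonneg _)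
  have hSpos : 0 < S := by
    rcases hS0.eq_or_lt with h | h
    · rw [← h] at hS1; norm_num at hS1
    · exact h
  obtain ⟨lam, hlam⟩ : ∃ lam : ℝ, lam = S ^ 2 - 1 + ε := ⟨_, rfl⟩
  have hlpos : 0 < lam := by linarith
  have hl1 : (0:ℝ) < 1 + lam := by linarith
  set p : ℕ → ℝ := fun n => ‖⟪e n, v⟫‖ / S with hp
  have hps : HasSum p 1 := by
    have := hSs.div_const S
    rwa [div_self hSpos.ne'] at this
  have hp0 : ∀ n, 0 ≤ p n := fun n => by positivity
  set τ : Op H := lam⁻¹ • ((1 + lam) • diagOp e p - projv v) with hτ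
  have hquad : ∀ x, ⟪x, τ x⟫ =
      ((lam⁻¹ * ((1 + lam) * (⟪x, diagOp e p x⟫).re - ‖⟪v, x⟫‖ ^ 2) : ℝ) : ℂ) := by
    intro x
    have him := diag_quad_im e hps.summable x
    have hre : ⟪x, diagOp e p x⟫ = (((⟪x, diagOp e p x⟫).re : ℝ) : ℂ) :=
      Complex.ext (by simp only [Complex.ofReal_re]) (by rw [him, Complex.ofReal_im])
    rw [hτ, smul_apply, ← Complex.coe_smul, inner_smul_right, sub_apply, inner_sub_right,
      smul_apply, ← Complex.coe_smul, inner_smul_right, projv_quad, hre]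
    push_cast
    simp
  have hdiag : ∀ n, ⟪e n, τ (e n)⟫ = ((lam⁻¹ * ((1 + lam) * p n - ‖⟪e n, v⟫‖ ^ 2) : ℝ) : ℂ) := by
    intro n
    rw [hquad, inner_diag e hps.summable, inner_bb, if_pos rfl, mul_one, Complex.ofReal_re,
      norm_inner_symm v]
  have hsum : HasSum (fun n => lam⁻¹ * ((1 + lam) * p n - ‖⟪e n, v⟫‖ ^ 2)) 1 := by
    have := (((hps.mul_left (1 + lam)).sub hsq).mul_left lam⁻¹)
    refine hasSum_cong this (fun n => rfl) ?_
    field_simp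
    ring
  have hpp : ∀ x, (⟪x, diagOp e p x⟫).re =
      (⟪x, diagOp e (fun n => ‖⟪e n, v⟫‖) x⟫).re / S := by
    intro x
    have h1 := diag_quad_re e hps.summable x
    have h2 := (diag_quad_re e hs x).div_const S
    refine h1.unique ?_
    exact hasSum_cong h2 (fun n => by simp only [hp]; ring) rfl
  refine sInf_le ⟨lam, hlpos.le, τ, ⟨?_, ?_, ?_⟩, ?_, ?_⟩
  · refine pos_of_quad (fun x => by rw [hquad, Complex.ofReal_im]) fun x => ?_
    rw [hquad, Complex.ofReal_re]
    refine mul_nonneg (by positivity) (sub_nonneg.2 ((hu x).trans ?_))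
    have hQ := (diag_pos e hs fun _ => norm_nonneg _).re_inner_nonneg_right x
    rw [RCLike.re_eq_complex_re] at hQ
    rw [hpp, mul_div_assoc', le_div_iff₀ hSpos]
    have : S * S ≤ 1 + lam := by nlinarith
    calc _ = S * S * (⟪x, diagOp e (fun n => ‖⟪e n, v⟫‖) x⟫).re := by ring
      _ ≤ _ := mul_le_mul_of_nonneg_right this hQ
  · simp_rw [hdiag, Complex.ofReal_re]
    exact hsum.summable
  · rw [trB]
    simp_rw [hdiag]
    rw [← Complex.ofReal_tsum, hsum.tsum_eq, Complex.ofReal_one]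
  · have : ((1 + lam)⁻¹ : ℝ) • (projv v + lam • τ) = diagOp e p := by
      rw [hτ, smul_smul, mul_inv_cancel₀ hlpos.ne', one_smul, add_sub_cancel, smul_smul,
        inv_mul_cancel₀ hl1.ne', one_smul]
    rw [this]
    exact diag_incoh e hp0 hps
  · congr 1
    linarith

/-- for a pure state `|ψ⟩ = ∑ₙ ψₙ |n⟩`, the generalized robustness of coherence
equals `(∑ₙ |ψₙ|)²` (in `ℝ≥0∞`, hence finite iff the amplitudes are absolutely summable). -/
theorem robustness_coherence_pure (e : HilbertBasis ℕ ℂ H)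
    (ψ : ℕ → ℂ) (hsq : Summable (fun n => ‖ψ n‖ ^ 2)) (hnorm : ∑' n : ℕ, ‖ψ n‖ ^ 2 = 1) :
    Robustness e (IncoherentStates e) (projv (∑' n : ℕ, ψ n • e n)) =
      (∑' n : ℕ, ENNReal.ofReal ‖ψ n‖) ^ 2 := by

  have hv := exists_vec e ψ hsq
  set v := ∑' n : ℕ, ψ n • e n
  have hsq' : HasSum (fun n => ‖⟪e n, v⟫‖ ^ 2) 1 := by
    simp_rw [hv]
    rw [← hnorm]
    exact hsq.hasSum
  refine le_antisymm ?_ ?_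
  · by_cases hs : Summable (fun n => ‖ψ n‖)
    · rw [← ENNReal.ofReal_tsum_of_nonneg (fun _ => norm_nonneg _) hs,
        ← ENNReal.ofReal_pow (tsum_nonneg fun _ => norm_nonneg _)]
      refine ENNReal.le_of_forall_pos_le_add fun ε hε _ => ?_
      have := upper_bound e v (by simpa only [hv] using hs) hsq' (ε := ε) (by exact_mod_cast hε)
      simp_rw [hv] at this
      refine this.trans ?_
      rw [ENNReal.ofReal_add (sq_nonneg _) ε.coe_nonneg, ENNReal.ofReal_coe_nnreal]
    · have : ∑' n : ℕ, ENNReal.ofReal ‖ψ n‖ = ⊤ := by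
        by_contra hne
        apply hs
        have := ENNReal.summable_toReal hne
        simpa using this
      rw [this]
      simp
  · refine le_sInf ?_
    rintro r ⟨lam, hl, τ, hτ, hI, rfl⟩
    have hb := lower_bound e v hl hτ hI hsq'.summable
    simp_rw [hv] at hb
    have h1 : ∑' n : ℕ, ENNReal.ofReal ‖ψ n‖ ≤ ENNReal.ofReal √(1 + lam) := by
      rw [ENNReal.tsum_eq_iSup_sum]
      refine iSup_le fun N => ?_
      rw [← ENNReal.ofReal_sum_of_nonneg fun _ _ => norm_nonneg _]
      exact ENNReal.ofReal_le_ofReal (hb N)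
    calc _ ≤ ENNReal.ofReal √(1 + lam) ^ 2 := by gcongr
      _ = _ := by rw [← ENNReal.ofReal_pow (Real.sqrt_nonneg _), Real.sq_sqrt (by linarith)]
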